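/- Let X be a KU-algebra, d a derivation of X, and μ a fuzzy left derivations KU-ideal of X with respect to d. If x, y ∈ X satisfy x ≤ d(y), then μ(d(x)) ≥ μ(d(y)). -/

import Mathlib

/-!
A derivation is regular (`d 𝟎 = 𝟎`) and decreasing (`d y ≤ y`). As `⋆` is antitone in its left
argument, `d y ⋆ x = 𝟎` forces `y ⋆ x = 𝟎`. Then the ideal inequality at `x := 𝟎` reads
`μ (d x) ≥ min (μ 𝟎) (μ (d y)) = μ (d y)`.
-/

/-- A KU-algebra: a set `X` with a binary operation `⋆` and a constant `𝟎` satisfying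
(KU1) `(x⋆y)⋆((y⋆z)⋆(x⋆z)) = 𝟎`, (KU2) `x⋆𝟎 = 𝟎`, (KU3) `𝟎⋆x = x`,
(KU4) `x⋆y = 𝟎` and `y⋆x = 𝟎` imply `x = y`. -/
class KUAlgebra (X : Type*) where
  star : X → X → X
  zero : X
  ku1 : ∀ x y z : X, star (star x y) (star (star y z) (star x z)) = zero
  ku2 : ∀ x : X, star x zero = zero
  ku3 : ∀ x : X, star zero x = x
  ku4 : ∀ x y : X, star x y = zero → star y x = zero → x = y

infixl:70 " ⋆ " => KUAlgebra.star
notation "𝟎" => KUAlgebra.zero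

/-- The order `x ≤ y ↔ y ⋆ x = 𝟎` on a KU-algebra. -/
def KUle {X : Type*} [KUAlgebra X] (x y : X) : Prop := y ⋆ x = 𝟎

/-- `x ∧ y := (x ⋆ y) ⋆ y` in a KU-algebra. -/
def KUwedge {X : Type*} [KUAlgebra X] (x y : X) : X := (x ⋆ y) ⋆ y

/-- An (ℓ,r)-derivation: `d(x⋆y) = (d(x)⋆y) ∧ (x⋆d(y))`. -/
def IsLRDeriv {X : Type*} [KUAlgebra X] (d : X → X) : Prop :=
  ∀ x y : X, d (x ⋆ y) = KUwedge (d x ⋆ y) (x ⋆ d y)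

/-- An (r,ℓ)-derivation: `d(x⋆y) = (x⋆d(y)) ∧ (d(x)⋆y)`. -/
def IsRLDeriv {X : Type*} [KUAlgebra X] (d : X → X) : Prop :=
  ∀ x y : X, d (x ⋆ y) = KUwedge (x ⋆ d y) (d x ⋆ y)

/-- A derivation is both an (ℓ,r)- and an (r,ℓ)-derivation. -/
def IsDeriv {X : Type*} [KUAlgebra X] (d : X → X) : Prop := IsLRDeriv d ∧ IsRLDeriv d

/-- A fuzzy left derivations KU-ideal of `X` with respect to a self map `d`:
a fuzzy set `μ : X → [0,1]` with `μ 𝟎 ≥ μ x` and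
`μ (d (x ⋆ z)) ≥ min (μ (d x ⋆ (y ⋆ z))) (μ (d y))`. -/
def IsFuzzyLeftDerivKUIdeal {X : Type*} [KUAlgebra X] (d : X → X) (μ : X → ℝ) : Prop :=
  (∀ x : X, μ x ∈ Set.Icc (0 : ℝ) 1) ∧
  (∀ x : X, μ 𝟎 ≥ μ x) ∧
  (∀ x y z : X, μ (d (x ⋆ z)) ≥ min (μ (d x ⋆ (y ⋆ z))) (μ (d y)))

/-- A fuzzy right derivations KU-ideal of `X` with respect to a self map `d`:
a fuzzy set `μ : X → [0,1]` with `μ 𝟎 ≥ μ x` and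
`μ (d (x ⋆ z)) ≥ min (μ (x ⋆ d (y ⋆ z))) (μ (d y))`. -/
def IsFuzzyRightDerivKUIdeal {X : Type*} [KUAlgebra X] (d : X → X) (μ : X → ℝ) : Prop :=
  (∀ x : X, μ x ∈ Set.Icc (0 : ℝ) 1) ∧
  (∀ x : X, μ 𝟎 ≥ μ x) ∧
  (∀ x y z : X, μ (d (x ⋆ z)) ≥ min (μ (x ⋆ d (y ⋆ z))) (μ (d y)))

lemma IsRLDeriv.map_zero {X : Type*} [KUAlgebra X] {d : X → X} (hd : IsRLDeriv d) :
    d 𝟎 = 𝟎 := by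
  have h := hd 𝟎 𝟎
  simpa only [KUwedge, KUAlgebra.ku2, KUAlgebra.ku3] using h

lemma KUAlgebra.star_star_self {X : Type*} [KUAlgebra X] (y z : X) : z ⋆ (y ⋆ z) = 𝟎 := by
  have h := KUAlgebra.ku1 y 𝟎 z
  simpa only [KUAlgebra.ku2, KUAlgebra.ku3] using h

/-- An (r,ℓ)-derivation is decreasing: expanding `d (𝟎 ⋆ y)` gives `d y = (d y ⋆ y) ⋆ y ≤ y`. -/
lemma IsRLDeriv.le_self {X : Type*} [KUAlgebra X] {d : X → X} (hd : IsRLDeriv d) (y : X) :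
    KUle (d y) y := by
  have h : d y = (d y ⋆ y) ⋆ y := by
    have h := hd 𝟎 y
    simpa only [KUwedge, hd.map_zero, KUAlgebra.ku3] using h
  unfold KUle
  rw [h]
  exact KUAlgebra.star_star_self _ _

/-- If `μ` is a fuzzy left derivations KU-ideal with respect to a derivation `d`
and `x ≤ d y`, then `μ (d x) ≥ μ (d y)`. -/
theorem fuzzy_left_deriv_ideal_antitone {X : Type*} [KUAlgebra X] (d : X → X) (hd : IsDeriv d)
    (μ : X → ℝ) (hμ : IsFuzzyLeftDerivKUIdeal d μ) (x y : X)
    (h : KUle x (d y)) :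
    μ (d x) ≥ μ (d y) := by
  have hyx : y ⋆ x = 𝟎 := by
    have h1 := KUAlgebra.ku1 y (d y) x
    rwa [hd.2.le_self y, h, KUAlgebra.ku3, KUAlgebra.ku3] at h1
  have h2 := hμ.2.2 𝟎 y x
  rwa [hd.2.map_zero, KUAlgebra.ku3, KUAlgebra.ku3, hyx, min_eq_right (hμ.2.1 _)] at h2
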